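/- Assume σ1 ≠ τ1, Res_x(h1, h1′) = 0, and Res_x(h1′, h1″) ≠ 0. Then h1 has exactly one double root ξ1 and one simple root ξ2 (ξ1 ≠ ξ2), the singular locus Sing equals {(0:1:0), (ξ1:0:1), (ξ2:0:1)}, and Sing has exactly 3 elements. -/

import Mathlib

open MvPolynomial

/-!
Let `A`, `B` be the binary quartic forms in `x`, `z` with roots `αᵢ`, `βᵢ`, and write
`B - A = z H` with `H` a binary cubic. Then `F = y⁴ z² - 2 (A + B) y² + H²`, so that
`z² F = (y² z² - (A + B))² - 4 A B`. At a singular point with `y z ≠ 0`, the `y`-derivative of this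
identity makes the base of the square vanish, hence `A B` and its partial derivatives vanish,
which is impossible as the eight roots are distinct. Euler's combination `2 F - y F_y` equals
`2 (H² - y⁴ z²)`, so the singular points are `(0 : 1 : 0)`, on `z = 0`, and the zeros of `H` on
`y = 0`. Up to nonzero factors the two resultants are the discriminant and `b² - 3 a c` of the cubic
`H (x, 0, 1)`: it has a double root, but not a triple one.
-/

section Cubic

section CommRing

variable {R : Type*} [CommRing R]

lemma det_sylvester_cubic_derivative (a b c d : R) :
    Matrix.det
      !![a, -b, c, -d, 0;
         0, a, -b, c, -d;
         3 * a, -2 * b, c, 0, 0;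
         0, 3 * a, -2 * b, c, 0;
         0, 0, 3 * a, -2 * b, c] = -(a * (⟨a, -b, c, -d⟩ : Cubic R).discr) := by
  simp [Matrix.det_succ_row_zero, Fin.sum_univ_succ, Fin.succAbove, Cubic.discr]
  ring

lemma det_sylvester_derivative_secondDerivative (a b c : R) :
    Matrix.det
      !![3 * a, -2 * b, c;
         6 * a, -2 * b, 0;
         0, 6 * a, -2 * b] = -(12 * a * ((-b) ^ 2 - 3 * a * c)) := by
  simp only [Matrix.det_fin_three, Matrix.of_apply, Matrix.cons_val', Matrix.cons_val_zero,
    Matrix.cons_val_fin_one, Matrix.cons_val_one, Matrix.cons_val]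
  ring

lemma eval_toPoly_neg_neg (a b c d x : R) :
    (⟨a, -b, c, -d⟩ : Cubic R).toPoly.eval x = a * x ^ 3 - b * x ^ 2 + c * x - d := by
  simp [Cubic.toPoly, sub_eq_add_neg]

lemma prod_X_sub_C_four (a b c d : R) :
    (({a, b, c, d} : Multiset R).map fun r => Polynomial.X - Polynomial.C r).prod =
      Polynomial.X ^ 4 - Polynomial.C (a + b + c + d) * Polynomial.X ^ 3 +
        Polynomial.C (a * b + a * c + a * d + b * c + b * d + c * d) * Polynomial.X ^ 2 -
        Polynomial.C (a * b * c + a * b * d + a * c * d + b * c * d) * Polynomial.X +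
        Polynomial.C (a * b * c * d) := by
  simp only [Multiset.insert_eq_cons, Multiset.map_cons, Multiset.map_singleton,
    Multiset.prod_cons, Multiset.prod_singleton, map_add, map_mul]
  ring

end CommRing

variable {k : Type*} [Field k]

lemma toPoly_eq_of_double_root {P : Cubic k} (ha : P.a ≠ 0) {u : k}
    (hu : P.a * u ^ 3 + P.b * u ^ 2 + P.c * u + P.d = 0)
    (hu' : 3 * P.a * u ^ 2 + 2 * P.b * u + P.c = 0) :
    P.toPoly = Polynomial.C P.a * (Polynomial.X - Polynomial.C u) ^ 2 *
      (Polynomial.X - Polynomial.C (-P.b / P.a - 2 * u)) := by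
  obtain ⟨v, hv⟩ : ∃ v, v = -P.b / P.a - 2 * u := ⟨_, rfl⟩
  have hb : P.b = P.a * -(u + u + v) := by rw [hv]; field_simp; ring
  have hc : P.c = P.a * (u * u + u * v + u * v) := by linear_combination hu' - 2 * u * hb
  have hd : P.d = P.a * -(u * u * v) := by linear_combination hu - u ^ 2 * hb - u * hc
  rw [← hv, pow_two, ← mul_assoc, Cubic.C_mul_prod_X_sub_C_eq, ← hb, ← hc, ← hd]

lemma exists_toPoly_eq_of_discr_eq_zero {P : Cubic k} (h2 : (2 : k) ≠ 0) (ha : P.a ≠ 0)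
    (hdiscr : P.discr = 0) (hD : P.b ^ 2 - 3 * P.a * P.c ≠ 0) :
    ∃ u v : k, u ≠ v ∧ P.toPoly =
      Polynomial.C P.a * (Polynomial.X - Polynomial.C u) ^ 2 *
        (Polynomial.X - Polynomial.C v) := by
  obtain ⟨D, hDdef⟩ : ∃ D, D = P.b ^ 2 - 3 * P.a * P.c := ⟨_, rfl⟩
  obtain ⟨n, hn⟩ : ∃ n, n = 9 * P.a * P.d - P.b * P.c := ⟨_, rfl⟩
  rw [← hDdef] at hD
  have h2D : 2 * D ≠ 0 := mul_ne_zero h2 hD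
  -- The remainder of `9 a P` on division by `P'` is `n - 2 D X`, so `u` is the only candidate.
  obtain ⟨u, hu⟩ : ∃ u, 2 * D * u = n := ⟨_, mul_div_cancel₀ _ h2D⟩
  rw [Cubic.discr] at hdiscr
  have hderiv : 3 * P.a * u ^ 2 + 2 * P.b * u + P.c = 0 := by
    have hn' : 3 * P.a * n ^ 2 + 4 * D * P.b * n + 4 * D ^ 2 * P.c = 0 := by
      rw [hn, hDdef]
      linear_combination -9 * P.a * hdiscr
    refine (mul_eq_zero_iff_left (pow_ne_zero 2 h2D)).mp ?_
    rw [← hu] at hn'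
    linear_combination hn'
  have hroot : P.a * u ^ 3 + P.b * u ^ 2 + P.c * u + P.d = 0 := by
    have hn' : P.a * n ^ 3 + 2 * D * P.b * n ^ 2 + 4 * D ^ 2 * P.c * n + 8 * D ^ 3 * P.d = 0 := by
      rw [hn, hDdef]
      linear_combination (9 * P.a * P.b * P.c - 2 * P.b ^ 3 - 27 * P.a ^ 2 * P.d) * hdiscr
    refine (mul_eq_zero_iff_left (pow_ne_zero 3 h2D)).mp ?_
    rw [← hu] at hn'
    linear_combination hn'
  refine ⟨u, _, fun huv => hD ?_, toPoly_eq_of_double_root ha hroot hderiv⟩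
  have hb : P.b = -(3 * P.a * u) := by
    field_simp at huv
    linear_combination huv
  linear_combination hDdef + (P.b - 3 * P.a * u) * hb - 3 * P.a * hderiv + 6 * P.a * u * hb

end Cubic

section Dehomogenize

variable {R : Type*} [CommRing R]

lemma aeval_smul_of_isHomogeneous {σ S : Type*} [CommRing S] [Algebra R S]
    {F : MvPolynomial σ R} {n : ℕ} (hF : F.IsHomogeneous n) (c : S) (v : σ → S) :
    aeval (c • v) F = c ^ n * aeval v F := by
  simp only [aeval_def, eval₂_eq, Finset.mul_sum]
  refine Finset.sum_congr rfl fun d hd => ?_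
  simp only [Pi.smul_apply, smul_eq_mul, mul_pow, Finset.prod_mul_distrib,
    Finset.prod_pow_eq_pow_sum, ← hF.degree_eq_sum_deg_support hd]
  ring

/-- The dehomogenization of a polynomial, setting the last variable to `1`. -/
noncomputable def dehomogenize {n : ℕ} :
    MvPolynomial (Fin (n + 1)) R →ₐ[R] MvPolynomial (Fin n) R :=
  aeval (Fin.snoc X 1 : Fin (n + 1) → MvPolynomial (Fin n) R)

lemma dehomogenize_fin_three :
    dehomogenize = aeval ![(X 0 : MvPolynomial (Fin 2) R), X 1, 1] := by
  ext i : 1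
  fin_cases i <;> simp [dehomogenize, Fin.snoc]

lemma aeval_dehomogenize {n : ℕ} {S : Type*} [CommRing S] [Algebra R S] (v : Fin n → S)
    (F : MvPolynomial (Fin (n + 1)) R) :
    aeval v (dehomogenize F) = aeval (Fin.snoc v 1 : Fin (n + 1) → S) F := by
  rw [dehomogenize, ← AlgHom.comp_apply]
  congr 1
  ext i : 1
  refine Fin.lastCases ?_ (fun j => ?_) i <;> simp

/- In the fraction field, `F = X_n ^ d * F (X_0 / X_n, …, X_{n-1} / X_n, 1)`. -/
lemma eq_of_dehomogenize_eq [IsDomain R] {n d : ℕ} {F G : MvPolynomial (Fin (n + 1)) R}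
    (hF : F.IsHomogeneous d) (hG : G.IsHomogeneous d) (h : dehomogenize F = dehomogenize G) :
    F = G := by
  let ι := algebraMap (MvPolynomial (Fin (n + 1)) R) (FractionRing (MvPolynomial (Fin (n + 1)) R))
  have hlast : ι (X (Fin.last n)) ≠ 0 := by
    simp [ι]
  let v : Fin n → FractionRing (MvPolynomial (Fin (n + 1)) R) :=
    fun j => ι (X j.castSucc) / ι (X (Fin.last n))
  have hv : (fun i => ι (X i)) = ι (X (Fin.last n)) • (Fin.snoc v 1 : Fin (n + 1) → _) := by
    ext i
    refine Fin.lastCases ?_ (fun j => ?_) i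
    · simp
    · simp [v, mul_div_cancel₀ _ hlast]
  have key {P : MvPolynomial (Fin (n + 1)) R} (hP : P.IsHomogeneous d) :
      ι P = ι (X (Fin.last n)) ^ d * aeval v (dehomogenize P) := by
    rw [aeval_dehomogenize, ← aeval_smul_of_isHomogeneous hP, ← hv]
    exact ((aeval_algebraMap_apply _ X P).trans (by rw [aeval_X_left_apply])).symm
  apply IsFractionRing.injective (MvPolynomial (Fin (n + 1)) R)
    (FractionRing (MvPolynomial (Fin (n + 1)) R))
  change ι F = ι G
  rw [key hF, key hG, h]

end Dehomogenize

section FormOfRoots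

variable {R : Type*} [CommRing R]

/-- The binary form `∏ c ∈ s, (x - c z)` with roots `s`, as a polynomial in `x`, `y`, `z`. -/
noncomputable def formOfRoots (s : Multiset R) : MvPolynomial (Fin 3) R :=
  (s.map fun c => X 0 - C c * X 2).prod

lemma formOfRoots_cons (c : R) (s : Multiset R) :
    formOfRoots (c ::ₘ s) = (X 0 - C c * X 2) * formOfRoots s := by
  simp [formOfRoots]

lemma formOfRoots_add (s t : Multiset R) :
    formOfRoots (s + t) = formOfRoots s * formOfRoots t := by
  simp [formOfRoots]

lemma isHomogeneous_formOfRoots (s : Multiset R) :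
    (formOfRoots s).IsHomogeneous s.card := by
  induction s using Multiset.induction with
  | empty => simpa [formOfRoots] using isHomogeneous_one (Fin 3) R
  | cons c s ih =>
    rw [formOfRoots_cons, Multiset.card_cons, add_comm]
    exact ((isHomogeneous_X R 0).sub (isHomogeneous_C_mul_X c 2)).mul ih

lemma dehomogenize_formOfRoots (s : Multiset R) :
    dehomogenize (formOfRoots s) =
      Polynomial.aeval (X 0) (s.map fun c => Polynomial.X - Polynomial.C c).prod := by
  rw [dehomogenize_fin_three, formOfRoots, map_multiset_prod, map_multiset_prod,
    Multiset.map_map, Multiset.map_map]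
  simp [Function.comp_def, algebraMap_eq]

lemma eval_formOfRoots (s : Multiset R) (w : Fin 3 → R) :
    eval w (formOfRoots s) = (s.map fun c => w 0 - c * w 2).prod := by
  simp [formOfRoots, map_multiset_prod]

lemma pderiv_one_formOfRoots (s : Multiset R) : pderiv 1 (formOfRoots s) = 0 := by
  induction s using Multiset.induction with
  | empty => simp [formOfRoots]
  | cons c s ih => simp [formOfRoots_cons, ih, pderiv_X]

lemma eval_formOfRoots_eq_zero {s : Multiset R} (hs : s ≠ 0) {w : Fin 3 → R} (h0 : w 0 = 0)
    (h2 : w 2 = 0) : eval w (formOfRoots s) = 0 := by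
  rw [eval_formOfRoots, h0, h2]
  simp [hs]

lemma eval_pderiv_formOfRoots_eq_zero {s : Multiset R} (hs : 2 ≤ s.card) {w : Fin 3 → R}
    (h0 : w 0 = 0) (h2 : w 2 = 0) (i : Fin 3) : eval w (pderiv i (formOfRoots s)) = 0 := by
  obtain ⟨c, hc⟩ := Multiset.card_pos_iff_exists_mem.mp (two_pos.trans_le hs)
  obtain ⟨t, rfl⟩ := Multiset.exists_cons_of_mem hc
  have ht : t ≠ 0 := by rintro rfl; simp at hs
  simp [formOfRoots_cons, h0, h2, eval_formOfRoots_eq_zero ht]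

variable [IsDomain R]

lemma eq_zero_of_eval_formOfRoots_eq_zero {s : Multiset R} {w : Fin 3 → R} (h2 : w 2 = 0)
    (h : eval w (formOfRoots s) = 0) : w 0 = 0 := by
  rw [eval_formOfRoots, h2] at h
  simp only [mul_zero, sub_zero, Multiset.map_const', Multiset.prod_replicate] at h
  exact eq_zero_of_pow_eq_zero h

lemma eval_pderiv_formOfRoots_ne_zero {s : Multiset R} (hs : s.Nodup) {w : Fin 3 → R}
    (h2 : w 2 ≠ 0) (h : eval w (formOfRoots s) = 0) : eval w (pderiv 0 (formOfRoots s)) ≠ 0 := by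
  rw [eval_formOfRoots, Multiset.prod_eq_zero_iff, Multiset.mem_map] at h
  obtain ⟨c, hc, hwc⟩ := h
  obtain ⟨t, rfl⟩ := Multiset.exists_cons_of_mem hc
  have hct : c ∉ t := (Multiset.nodup_cons.mp hs).1
  have hderiv : eval w (pderiv 0 (formOfRoots (c ::ₘ t))) = eval w (formOfRoots t) := by
    simp [formOfRoots_cons, hwc, pderiv_X]
  rw [hderiv, eval_formOfRoots, Ne, Multiset.prod_eq_zero_iff, Multiset.mem_map]
  rintro ⟨b, hb, hwb⟩
  have hbc : b = c := mul_right_cancel₀ h2 (by linear_combination hwc - hwb)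
  exact hct (hbc ▸ hb)

lemma X_two_mul_C_mul_formOfRoots_eq_sub {r s t : Multiset R} {a : R}
    (hrs : r.card + 1 = s.card) (hrt : r.card + 1 = t.card)
    (h : Polynomial.C a * (r.map fun c => Polynomial.X - Polynomial.C c).prod =
      (t.map fun c => Polynomial.X - Polynomial.C c).prod -
        (s.map fun c => Polynomial.X - Polynomial.C c).prod) :
    X 2 * (C a * formOfRoots r) = formOfRoots t - formOfRoots s := by
  have hl : (X 2 * (C a * formOfRoots r)).IsHomogeneous (r.card + 1) := by
    rw [add_comm]
    exact (isHomogeneous_X R 2).mul ((isHomogeneous_formOfRoots r).C_mul a)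
  have hr : (formOfRoots t - formOfRoots s).IsHomogeneous (r.card + 1) :=
    (hrt ▸ isHomogeneous_formOfRoots t).sub (hrs ▸ isHomogeneous_formOfRoots s)
  refine eq_of_dehomogenize_eq hl hr ?_
  have hX : dehomogenize (X 2 : MvPolynomial (Fin 3) R) = 1 := by simp [dehomogenize_fin_three]
  have hC : dehomogenize (C a : MvPolynomial (Fin 3) R) =
      Polynomial.aeval (X 0) (Polynomial.C a) := by
    simp [dehomogenize_fin_three, algebraMap_eq]
  rw [map_mul, map_mul, map_sub, hX, hC, one_mul, dehomogenize_formOfRoots,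
    dehomogenize_formOfRoots, dehomogenize_formOfRoots, ← map_mul, h, map_sub]

end FormOfRoots

section Singular

/-- `w` is a singular zero of `F`: for `F` homogeneous and `w ≠ 0`, a singular point of the
projective hypersurface `F = 0`. -/
def IsSingularZero {σ R : Type*} [CommSemiring R] (F : MvPolynomial σ R) (w : σ → R) : Prop :=
  eval w F = 0 ∧ ∀ i, eval w (pderiv i F) = 0

lemma isSingularZero_of_mul_eq_sq_sub {σ R : Type*} [CommRing R] [IsDomain R]
    {F M P Q : MvPolynomial σ R} (h : M * F = Q ^ 2 - P) {w : σ → R} (hw : IsSingularZero F w)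
    {j : σ} (h2 : (2 : R) ≠ 0) (hP : eval w (pderiv j P) = 0) (hQ : eval w (pderiv j Q) ≠ 0) :
    IsSingularZero P w := by
  have hderiv (i : σ) : 2 * eval w Q * eval w (pderiv i Q) = eval w (pderiv i P) := by
    have hi : 0 = 2 * (eval w Q * eval w (pderiv i Q)) - eval w (pderiv i P) := by
      simpa [Derivation.leibniz_pow, hw.1, hw.2 i] using
        congrArg (fun T => eval w (pderiv i T)) h
    linear_combination -hi
  have hQw : eval w Q = 0 := by simpa [hP, h2, hQ] using hderiv j
  refine ⟨?_, fun i => by rw [← hderiv, hQw]; ring⟩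
  simpa [hw.1, hQw] using congrArg (eval w) h

end Singular

section SexticForm

variable {R : Type*} [CommRing R]

/-- For binary forms `A`, `B`, `H` in `x`, `z` of degrees 4, 4, 3 with `z H = B - A`, the
homogenization `y⁴ z² - 2 (A + B) y² + H²` of `y⁴ - 2 (A + B) y² + (A - B)²`. -/
noncomputable def sexticForm (A B H : MvPolynomial (Fin 3) R) : MvPolynomial (Fin 3) R :=
  X 1 ^ 4 * X 2 ^ 2 - C 2 * (A + B) * X 1 ^ 2 + H ^ 2

lemma X_two_sq_mul_sexticForm {A B H : MvPolynomial (Fin 3) R} (hAB : X 2 * H = B - A) :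
    X 2 ^ 2 * sexticForm A B H = (X 1 ^ 2 * X 2 ^ 2 - (A + B)) ^ 2 - C 4 * (A * B) := by
  rw [sexticForm, map_ofNat, map_ofNat]
  linear_combination (X 2 * H + B - A) * hAB

variable [IsDomain R]

lemma eq_sexticForm_of_dehomogenize_eq {F A B H : MvPolynomial (Fin 3) R}
    (hF : F.IsHomogeneous 6) (hA : A.IsHomogeneous 4) (hB : B.IsHomogeneous 4)
    (hH : H.IsHomogeneous 3) (hAB : X 2 * H = B - A)
    (h : dehomogenize F = X 1 ^ 4 - C 2 * (dehomogenize A + dehomogenize B) * X 1 ^ 2 +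
      (dehomogenize A - dehomogenize B) ^ 2) : F = sexticForm A B H := by
  have hG : (sexticForm A B H).IsHomogeneous 6 :=
    (((isHomogeneous_X_pow 1 4).mul (isHomogeneous_X_pow 2 2)).sub
      (((hA.add hB).C_mul 2).mul (isHomogeneous_X_pow 1 2))).add (hH.pow 2)
  have hdH : dehomogenize H = dehomogenize B - dehomogenize A := by
    simpa [dehomogenize_fin_three] using congrArg dehomogenize hAB
  refine eq_of_dehomogenize_eq hF hG ?_
  simp only [h, sexticForm, map_add, map_sub, map_mul, map_pow, hdH]
  simp only [dehomogenize_fin_three, aeval_X, Matrix.cons_val_one, Matrix.cons_val_zero,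
    Matrix.cons_val, one_pow, mul_one, algHom_C, algebraMap_eq]
  ring

lemma eval_sq_eq_of_isSingularZero_sexticForm {A B H : MvPolynomial (Fin 3) R}
    (h2 : (2 : R) ≠ 0) (hA : pderiv 1 A = 0) (hB : pderiv 1 B = 0) (hH : pderiv 1 H = 0)
    {w : Fin 3 → R} (hw : IsSingularZero (sexticForm A B H) w) :
    eval w H ^ 2 = w 1 ^ 4 * w 2 ^ 2 := by
  have hG : w 1 ^ 4 * w 2 ^ 2 - 2 * (eval w A + eval w B) * w 1 ^ 2 + eval w H ^ 2 = 0 := by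
    simpa [sexticForm] using hw.1
  have hy : w 2 ^ 2 * (4 * w 1 ^ 3) - 2 * (eval w A + eval w B) * (2 * w 1) = 0 := by
    simpa [sexticForm, pderiv_X, Derivation.leibniz_pow, hA, hB, hH] using hw.2 1
  refine mul_left_cancel₀ h2 ?_
  linear_combination 2 * hG - w 1 * hy

variable {r s t : Multiset R} {w : Fin 3 → R}

lemma eq_zero_of_isSingularZero_sexticForm {H : MvPolynomial (Fin 3) R} (h2 : (2 : R) ≠ 0)
    (hst : (s + t).Nodup) (hH : X 2 * H = formOfRoots t - formOfRoots s)
    (hw : IsSingularZero (sexticForm (formOfRoots s) (formOfRoots t) H) w) (hz : w 2 ≠ 0) :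
    w 1 = 0 := by
  by_contra hy
  have h4 : (4 : R) ≠ 0 := by
    convert mul_ne_zero h2 h2
    norm_num
  have hdouble : IsSingularZero (C 4 * (formOfRoots s * formOfRoots t)) w :=
    isSingularZero_of_mul_eq_sq_sub (j := 1) (X_two_sq_mul_sexticForm hH) hw h2
      (by simp [pderiv_one_formOfRoots])
      (by simp [pderiv_one_formOfRoots, pderiv_X, Derivation.leibniz_pow, h2, hy, hz])
  rw [← formOfRoots_add] at hdouble
  refine eval_pderiv_formOfRoots_ne_zero hst hz ?_ ?_
  · simpa [h4] using hdouble.1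
  · simpa [h4] using hdouble.2 0

theorem isSingularZero_sexticForm_iff {a : R} (h2 : (2 : R) ≠ 0) (ha : a ≠ 0) (hr : r ≠ 0)
    (hs : 2 ≤ s.card) (ht : 2 ≤ t.card) (hst : (s + t).Nodup)
    (hH : X 2 * (C a * formOfRoots r) = formOfRoots t - formOfRoots s) :
    IsSingularZero (sexticForm (formOfRoots s) (formOfRoots t) (C a * formOfRoots r)) w ↔
      (w 0 = 0 ∧ w 2 = 0) ∨ (w 1 = 0 ∧ eval w (formOfRoots r) = 0) := by
  constructor
  · intro hw
    have hsq := eval_sq_eq_of_isSingularZero_sexticForm h2 (pderiv_one_formOfRoots s)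
      (pderiv_one_formOfRoots t) (by simp [pderiv_one_formOfRoots]) hw
    by_cases hz : w 2 = 0
    · have hroot : eval w (formOfRoots r) = 0 := by simpa [hz, ha] using hsq
      exact .inl ⟨eq_zero_of_eval_formOfRoots_eq_zero hz hroot, hz⟩
    · have hy := eq_zero_of_isSingularZero_sexticForm h2 hst hH hw hz
      exact .inr ⟨hy, by simpa [hy, ha] using hsq⟩
  · rintro (⟨hx, hz⟩ | ⟨hy, hroot⟩)
    · have hs0 : s ≠ 0 := Multiset.card_pos.mp (two_pos.trans_le hs)
      have ht0 : t ≠ 0 := Multiset.card_pos.mp (two_pos.trans_le ht)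
      refine ⟨?_, fun i => ?_⟩
      · simp [sexticForm, hz, eval_formOfRoots_eq_zero _ hx hz, hr, hs0, ht0]
      · simp [sexticForm, hz, eval_formOfRoots_eq_zero _ hx hz, hr, hs0, ht0,
          eval_pderiv_formOfRoots_eq_zero _ hx hz, hs, ht, Derivation.leibniz_pow]
    · exact ⟨by simp [sexticForm, hy, hroot],
        fun i => by simp [sexticForm, hy, hroot, Derivation.leibniz_pow]⟩

end SexticForm

section Projective

variable {k : Type*} [Field k]

lemma eq_mk_iff_exists_smul_eq_rep {V : Type*} [AddCommGroup V] [Module k V]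
    {P : Projectivization k V} {v : V} (hv : v ≠ 0) :
    P = Projectivization.mk k v hv ↔ ∃ c : k, c • v = P.rep := by
  conv_lhs => rw [← P.mk_rep, Projectivization.mk_eq_mk_iff']

variable {P : Projectivization k (Fin 3 → k)}

lemma eq_mk_zero_one_zero_iff (hv : (![0, 1, 0] : Fin 3 → k) ≠ 0) :
    P = Projectivization.mk k ![0, 1, 0] hv ↔ P.rep 0 = 0 ∧ P.rep 2 = 0 := by
  rw [eq_mk_iff_exists_smul_eq_rep]
  constructor
  · rintro ⟨c, hc⟩
    simp [← hc]
  · rintro ⟨hx, hz⟩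
    exact ⟨P.rep 1, by ext i; fin_cases i <;> simp [hx, hz]⟩

lemma eq_mk_zero_one_iff {ξ : k} (hv : (![ξ, 0, 1] : Fin 3 → k) ≠ 0) :
    P = Projectivization.mk k ![ξ, 0, 1] hv ↔ P.rep 1 = 0 ∧ P.rep 0 - ξ * P.rep 2 = 0 := by
  rw [eq_mk_iff_exists_smul_eq_rep, sub_eq_zero]
  constructor
  · rintro ⟨c, hc⟩
    simp [← hc, mul_comm]
  · rintro ⟨hy, hx⟩
    exact ⟨P.rep 2, by ext i; fin_cases i <;> simp [hx, hy, mul_comm]⟩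

theorem setOf_isSingularZero_rep_eq {s t : Multiset k} {a u v : k} {F : MvPolynomial (Fin 3) k}
    (h2 : (2 : k) ≠ 0) (ha : a ≠ 0) (hs : s.card = 4) (ht : t.card = 4) (hst : (s + t).Nodup)
    (hsub : Polynomial.C a * (Polynomial.X - Polynomial.C u) ^ 2 *
        (Polynomial.X - Polynomial.C v) =
      (t.map fun c => Polynomial.X - Polynomial.C c).prod -
        (s.map fun c => Polynomial.X - Polynomial.C c).prod)
    (hF : F.IsHomogeneous 6)
    (hFst : dehomogenize F = X 1 ^ 4 - C 2 * (dehomogenize (formOfRoots s) +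
      dehomogenize (formOfRoots t)) * X 1 ^ 2 +
      (dehomogenize (formOfRoots s) - dehomogenize (formOfRoots t)) ^ 2)
    (h0 : (![0, 1, 0] : Fin 3 → k) ≠ 0) (hu : (![u, 0, 1] : Fin 3 → k) ≠ 0)
    (hv : (![v, 0, 1] : Fin 3 → k) ≠ 0) :
    {P : Projectivization k (Fin 3 → k) | IsSingularZero F P.rep} =
      {Projectivization.mk k ![0, 1, 0] h0, Projectivization.mk k ![u, 0, 1] hu,
        Projectivization.mk k ![v, 0, 1] hv} := by
  have hH : X 2 * (C a * formOfRoots {u, u, v}) = formOfRoots t - formOfRoots s :=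
    X_two_mul_C_mul_formOfRoots_eq_sub (by simp [hs]) (by simp [ht])
      (by simpa [pow_two, mul_assoc] using hsub)
  have hFeq : F = sexticForm (formOfRoots s) (formOfRoots t) (C a * formOfRoots {u, u, v}) :=
    eq_sexticForm_of_dehomogenize_eq hF (hs ▸ isHomogeneous_formOfRoots s)
      (ht ▸ isHomogeneous_formOfRoots t) ((isHomogeneous_formOfRoots {u, u, v}).C_mul a) hH hFst
  ext P
  rw [Set.mem_ofPred_eq, hFeq, isSingularZero_sexticForm_iff h2 ha (by simp) (by simp [hs])
    (by simp [ht]) hst hH, Set.mem_insert_iff, Set.mem_insert_iff, Set.mem_singleton_iff,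
    eq_mk_zero_one_zero_iff, eq_mk_zero_one_iff, eq_mk_zero_one_iff, eval_formOfRoots]
  simp [and_or_left]

lemma ncard_mk_zero_one_zero_mk_mk {ξ η : k} (h : ξ ≠ η) (h0 : (![0, 1, 0] : Fin 3 → k) ≠ 0)
    (hξ : (![ξ, 0, 1] : Fin 3 → k) ≠ 0) (hη : (![η, 0, 1] : Fin 3 → k) ≠ 0) :
    ({Projectivization.mk k ![0, 1, 0] h0, Projectivization.mk k ![ξ, 0, 1] hξ,
      Projectivization.mk k ![η, 0, 1] hη} : Set (Projectivization k (Fin 3 → k))).ncard = 3 := by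
  refine Set.ncard_eq_three.mpr ⟨_, _, _, ?_, ?_, ?_, rfl⟩ <;>
    rw [Ne, Projectivization.mk_eq_mk_iff'] <;> rintro ⟨c, hc⟩
  · simpa using congrFun hc 1
  · simpa using congrFun hc 1
  · have hc1 : c = 1 := by simpa using congrFun hc 2
    exact h (by simpa [hc1] using (congrFun hc 0).symm)

end Projective

theorem stmt_13_general
    {k : Type*} [Field k]
    (α1 α2 α3 α4 β1 β2 β3 β4 : k)
    (hdist : ([α1, α2, α3, α4, β1, β2, β3, β4] : List k).Pairwise (· ≠ ·))
    (σ1 σ2 σ3 σ4 τ1 τ2 τ3 τ4 : k)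
    (hσ1 : σ1 = α1 + α2 + α3 + α4)
    (hσ2 : σ2 = α1 * α2 + α1 * α3 + α1 * α4 + α2 * α3 + α2 * α4 + α3 * α4)
    (hσ3 : σ3 = α1 * α2 * α3 + α1 * α2 * α4 + α1 * α3 * α4 + α2 * α3 * α4)
    (hσ4 : σ4 = α1 * α2 * α3 * α4)
    (hτ1 : τ1 = β1 + β2 + β3 + β4)
    (hτ2 : τ2 = β1 * β2 + β1 * β3 + β1 * β4 + β2 * β3 + β2 * β4 + β3 * β4)
    (hτ3 : τ3 = β1 * β2 * β3 + β1 * β2 * β4 + β1 * β3 * β4 + β2 * β3 * β4)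
    (hτ4 : τ4 = β1 * β2 * β3 * β4)
    (φ1 φ2 f : MvPolynomial (Fin 2) k)
    (hφ1 : φ1 = (X 0 - C α1) * (X 0 - C α2) * (X 0 - C α3) * (X 0 - C α4))
    (hφ2 : φ2 = (X 0 - C β1) * (X 0 - C β2) * (X 0 - C β3) * (X 0 - C β4))
    (hf : f = X 1 ^ 4 - C 2 * (φ1 + φ2) * X 1 ^ 2 + (φ1 - φ2) ^ 2)
    (F : MvPolynomial (Fin 3) k)
    (hFhom : F.IsHomogeneous 6)
    (hFf : aeval ![(X 0 : MvPolynomial (Fin 2) k), X 1, 1] F = f)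
    (Sing : Set (Projectivization k (Fin 3 → k)))
    (hSing : ∀ P : Projectivization k (Fin 3 → k),
      P ∈ Sing ↔ (eval P.rep F = 0 ∧
        eval P.rep (pderiv 0 F) = 0 ∧
        eval P.rep (pderiv 1 F) = 0 ∧
        eval P.rep (pderiv 2 F) = 0))
    (h1 : k → k)
    (hh1 : ∀ x : k, h1 x = (σ1 - τ1) * x ^ 3 - (σ2 - τ2) * x ^ 2 + (σ3 - τ3) * x - (σ4 - τ4))
    -- res1 = Res_x(h1, h1'), the determinant of the Sylvester matrix of the
    -- cubic h1 and its derivative h1'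
    (res1 : k)
    (hres1 : res1 = Matrix.det
      !![σ1 - τ1, -(σ2 - τ2), σ3 - τ3, -(σ4 - τ4), 0;
         0, σ1 - τ1, -(σ2 - τ2), σ3 - τ3, -(σ4 - τ4);
         3 * (σ1 - τ1), -2 * (σ2 - τ2), σ3 - τ3, 0, 0;
         0, 3 * (σ1 - τ1), -2 * (σ2 - τ2), σ3 - τ3, 0;
         0, 0, 3 * (σ1 - τ1), -2 * (σ2 - τ2), σ3 - τ3])
    -- res2 = Res_x(h1', h1''), the determinant of the Sylvester matrix of the
    -- quadratic h1' and the linear h1''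
    (res2 : k)
    (hres2 : res2 = Matrix.det
      !![3 * (σ1 - τ1), -2 * (σ2 - τ2), σ3 - τ3;
         6 * (σ1 - τ1), -2 * (σ2 - τ2), 0;
         0, 6 * (σ1 - τ1), -2 * (σ2 - τ2)])
    (hr1 : res1 = 0) (hr2 : res2 ≠ 0) :
    ∃ ξ1 ξ2 : k, ξ1 ≠ ξ2
      ∧ (∀ x : k, h1 x = (σ1 - τ1) * (x - ξ1) ^ 2 * (x - ξ2))
      ∧ Sing = {Projectivization.mk k (![0, 1, 0] : Fin 3 → k)
                  (by intro hc; simpa using congrFun hc 1),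
                Projectivization.mk k (![ξ1, 0, 1] : Fin 3 → k)
                  (by intro hc; simpa using congrFun hc 2),
                Projectivization.mk k (![ξ2, 0, 1] : Fin 3 → k)
                  (by intro hc; simpa using congrFun hc 2)}
      ∧ Sing.ncard = 3 := by
  rw [hres2, det_sylvester_derivative_secondDerivative, neg_ne_zero, mul_ne_zero_iff,
    mul_ne_zero_iff] at hr2
  obtain ⟨⟨h12, ha⟩, hD⟩ := hr2
  have h2 : (2 : k) ≠ 0 := fun h => h12 (by linear_combination 6 * h)
  rw [hres1, det_sylvester_cubic_derivative, neg_eq_zero, mul_eq_zero_iff_left ha] at hr1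
  obtain ⟨u, v, huv, hfac⟩ := exists_toPoly_eq_of_discr_eq_zero h2 ha hr1 hD
  have hsub : (⟨σ1 - τ1, -(σ2 - τ2), σ3 - τ3, -(σ4 - τ4)⟩ : Cubic k).toPoly =
      (({β1, β2, β3, β4} : Multiset k).map fun c => Polynomial.X - Polynomial.C c).prod -
        (({α1, α2, α3, α4} : Multiset k).map fun c => Polynomial.X - Polynomial.C c).prod := by
    rw [prod_X_sub_C_four, prod_X_sub_C_four, Cubic.toPoly, ← hσ1, ← hσ2, ← hσ3, ← hσ4, ← hτ1,
      ← hτ2, ← hτ3, ← hτ4]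
    simp only [map_sub, map_neg]
    ring
  have hlocus := setOf_isSingularZero_rep_eq h2 ha (s := {α1, α2, α3, α4})
    (t := {β1, β2, β3, β4}) rfl rfl (Multiset.coe_nodup.mpr hdist) (hfac ▸ hsub) hFhom (by
      rw [dehomogenize_formOfRoots, dehomogenize_formOfRoots, dehomogenize_fin_three, hFf, hf,
        hφ1, hφ2]
      simp [mul_assoc, algebraMap_eq])
  obtain rfl : Sing = {P | IsSingularZero F P.rep} := by
    ext P
    simp [hSing, IsSingularZero, Fin.forall_fin_succ]
  refine ⟨u, v, huv, fun x => ?_, hlocus _ _ _, ?_⟩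
  · rw [hh1, ← eval_toPoly_neg_neg, hfac]
    simp
  · rw [hlocus (by simp) (by simp) (by simp)]
    exact ncard_mk_zero_one_zero_mk_mk huv _ _ _

/-- Case (I-2): if σ1 ≠ τ1, Res_x(h1, h1') = 0 and Res_x(h1', h1'') ≠ 0, then
h1 has a double root ξ1 and a simple root ξ2, and
Sing = {(0:1:0), (ξ1:0:1), (ξ2:0:1)} has exactly 3 elements. -/
theorem stmt_13
    {k : Type*} [Field k] [IsAlgClosed k]
    (p : ℕ) [CharP k p] (hp : p = 0 ∨ 5 ≤ p)
    (α1 α2 α3 α4 β1 β2 β3 β4 : k)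
    (hdist : ([α1, α2, α3, α4, β1, β2, β3, β4] : List k).Pairwise (· ≠ ·))
    (σ1 σ2 σ3 σ4 τ1 τ2 τ3 τ4 : k)
    (hσ1 : σ1 = α1 + α2 + α3 + α4)
    (hσ2 : σ2 = α1 * α2 + α1 * α3 + α1 * α4 + α2 * α3 + α2 * α4 + α3 * α4)
    (hσ3 : σ3 = α1 * α2 * α3 + α1 * α2 * α4 + α1 * α3 * α4 + α2 * α3 * α4)
    (hσ4 : σ4 = α1 * α2 * α3 * α4)
    (hτ1 : τ1 = β1 + β2 + β3 + β4)
    (hτ2 : τ2 = β1 * β2 + β1 * β3 + β1 * β4 + β2 * β3 + β2 * β4 + β3 * β4)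
    (hτ3 : τ3 = β1 * β2 * β3 + β1 * β2 * β4 + β1 * β3 * β4 + β2 * β3 * β4)
    (hτ4 : τ4 = β1 * β2 * β3 * β4)
    (φ1 φ2 f : MvPolynomial (Fin 2) k)
    (hφ1 : φ1 = (X 0 - C α1) * (X 0 - C α2) * (X 0 - C α3) * (X 0 - C α4))
    (hφ2 : φ2 = (X 0 - C β1) * (X 0 - C β2) * (X 0 - C β3) * (X 0 - C β4))
    (hf : f = X 1 ^ 4 - C 2 * (φ1 + φ2) * X 1 ^ 2 + (φ1 - φ2) ^ 2)
    (F : MvPolynomial (Fin 3) k)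
    (hFhom : F.IsHomogeneous 6)
    (hFf : aeval ![(X 0 : MvPolynomial (Fin 2) k), X 1, 1] F = f)
    (Sing : Set (Projectivization k (Fin 3 → k)))
    (hSing : ∀ P : Projectivization k (Fin 3 → k),
      P ∈ Sing ↔ (eval P.rep F = 0 ∧
        eval P.rep (pderiv 0 F) = 0 ∧
        eval P.rep (pderiv 1 F) = 0 ∧
        eval P.rep (pderiv 2 F) = 0))
    (h1 : k → k)
    (hh1 : ∀ x : k, h1 x = (σ1 - τ1) * x ^ 3 - (σ2 - τ2) * x ^ 2 + (σ3 - τ3) * x - (σ4 - τ4))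
    -- res1 = Res_x(h1, h1'), the determinant of the Sylvester matrix of the
    -- cubic h1 and its derivative h1'
    (res1 : k)
    (hres1 : res1 = Matrix.det
      !![σ1 - τ1, -(σ2 - τ2), σ3 - τ3, -(σ4 - τ4), 0;
         0, σ1 - τ1, -(σ2 - τ2), σ3 - τ3, -(σ4 - τ4);
         3 * (σ1 - τ1), -2 * (σ2 - τ2), σ3 - τ3, 0, 0;
         0, 3 * (σ1 - τ1), -2 * (σ2 - τ2), σ3 - τ3, 0;
         0, 0, 3 * (σ1 - τ1), -2 * (σ2 - τ2), σ3 - τ3])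
    -- res2 = Res_x(h1', h1''), the determinant of the Sylvester matrix of the
    -- quadratic h1' and the linear h1''
    (res2 : k)
    (hres2 : res2 = Matrix.det
      !![3 * (σ1 - τ1), -2 * (σ2 - τ2), σ3 - τ3;
         6 * (σ1 - τ1), -2 * (σ2 - τ2), 0;
         0, 6 * (σ1 - τ1), -2 * (σ2 - τ2)])
    (hστ : σ1 ≠ τ1) (hr1 : res1 = 0) (hr2 : res2 ≠ 0) :
    ∃ ξ1 ξ2 : k, ξ1 ≠ ξ2
      ∧ (∀ x : k, h1 x = (σ1 - τ1) * (x - ξ1) ^ 2 * (x - ξ2))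
      ∧ Sing = {Projectivization.mk k (![0, 1, 0] : Fin 3 → k)
                  (by intro hc; simpa using congrFun hc 1),
                Projectivization.mk k (![ξ1, 0, 1] : Fin 3 → k)
                  (by intro hc; simpa using congrFun hc 2),
                Projectivization.mk k (![ξ2, 0, 1] : Fin 3 → k)
                  (by intro hc; simpa using congrFun hc 2)}
      ∧ Sing.ncard = 3 :=
  stmt_13_general α1 α2 α3 α4 β1 β2 β3 β4 hdist σ1 σ2 σ3 σ4 τ1 τ2 τ3 τ4 hσ1 hσ2 hσ3 hσ4 hτ1 hτ2
    hτ3 hτ4 φ1 φ2 f hφ1 hφ2 hf F hFhom hFf Sing hSing h1 hh1 res1 hres1 res2 hres2 hr1 hr2
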